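/- (Theorem 3 of the paper, outcome-remembered case.) Fix rx, ry, rz ∈ ℝ and define f : ℝ → ℝ → Matrix (Fin 2) (Fin 2) ℂ by f x1 x2 := (1/2) • (1 + ((x2 + rz·x1)/(x1 + x2·rz)) • σz + (√(x1²−x2²)/(x1 + x2·rz)) • (rx • σx + ry • σy)) (the post-measurement state ρ_f1 conditioned on outcome E1, with measurement coefficients α = x1, β = x2). Let (x1, x2) satisfy 0 < x2 < x1 and x1 + x2·rz ≠ 0, and let D1, D2 be the entrywise partial derivative matrices of f at (x1, x2). Then x1 • D1 + x2 • D2 = 0, and consequently D1 * D2 = D2 * D1; hence the two parameter-derivatives of ρ_f1 with respect to the measurement coefficients α and β are proportional and commute. -/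

import Mathlib

open Matrix

noncomputable def σx : Matrix (Fin 2) (Fin 2) ℂ := !![0, 1; 1, 0]
noncomputable def σy : Matrix (Fin 2) (Fin 2) ℂ := !![0, -Complex.I; Complex.I, 0]
noncomputable def σz : Matrix (Fin 2) (Fin 2) ℂ := !![1, 0; 0, -1]

/-- Entrywise partial derivative of a two-parameter family of matrices in the first
parameter, at `(x1, x2)`. -/
noncomputable def pderiv1 (f : ℝ → ℝ → Matrix (Fin 2) (Fin 2) ℂ) (x1 x2 : ℝ) :
    Matrix (Fin 2) (Fin 2) ℂ :=
  Matrix.of fun i j => deriv (fun t => f t x2 i j) x1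

/-- Entrywise partial derivative of a two-parameter family of matrices in the second
parameter, at `(x1, x2)`. -/
noncomputable def pderiv2 (f : ℝ → ℝ → Matrix (Fin 2) (Fin 2) ℂ) (x1 x2 : ℝ) :
    Matrix (Fin 2) (Fin 2) ℂ :=
  Matrix.of fun i j => deriv (fun t => f x1 t i j) x2

/-!
Scaling both measurement coefficients by `c > 0` leaves the post-measurement state unchanged, so the
state is constant along the ray through `(x1, x2)`. Its derivative in the direction `(x1, x2)`,
which is `x1 • D1 + x2 • D2`, therefore vanishes (Euler's identity in degree zero), and two matrices
tied by such a linear relation commute.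
-/

open Filter Topology

section Euler

variable {𝕜 E F : Type*} [NontriviallyNormedField 𝕜] [NormedAddCommGroup E] [NormedSpace 𝕜 E]
  [NormedAddCommGroup F] [NormedSpace 𝕜 F]

lemma fderiv_apply_self_eq_zero_of_eventually_smul_eq {g : E → F} {x : E}
    (hg : DifferentiableAt 𝕜 g x) (hinv : ∀ᶠ c in 𝓝 (1 : 𝕜), g (c • x) = g x) :
    fderiv 𝕜 g x x = 0 := by
  have hray : HasDerivAt (fun c : 𝕜 => c • x) x 1 := by
    simpa only [id, one_smul] using (hasDerivAt_id (1 : 𝕜)).smul_const x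
  have hcomp : HasDerivAt (fun c : 𝕜 => g (c • x)) (fderiv 𝕜 g x x) 1 :=
    hg.hasFDerivAt.comp_hasDerivAt_of_eq 1 hray (one_smul 𝕜 x).symm
  exact hcomp.unique ((hasDerivAt_const 1 (g x)).congr_of_eventuallyEq hinv)

lemma fderiv_prod_apply_eq_smul_deriv_add_smul_deriv {g : 𝕜 × 𝕜 → F} {a b : 𝕜}
    (hg : DifferentiableAt 𝕜 g (a, b)) (u v : 𝕜) :
    fderiv 𝕜 g (a, b) (u, v) =
      u • deriv (fun t => g (t, b)) a + v • deriv (fun t => g (a, t)) b := by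
  have hleft : HasDerivAt (fun t => g (t, b)) (fderiv 𝕜 g (a, b) (1, 0)) a :=
    hg.hasFDerivAt.comp_hasDerivAt a ((hasDerivAt_id a).prodMk (hasDerivAt_const a b))
  have hright : HasDerivAt (fun t => g (a, t)) (fderiv 𝕜 g (a, b) (0, 1)) b :=
    hg.hasFDerivAt.comp_hasDerivAt b ((hasDerivAt_const b a).prodMk (hasDerivAt_id b))
  rw [hleft.deriv, hright.deriv, ← map_smul, ← map_smul, ← map_add]
  simp

end Euler

lemma smul_pderiv1_add_smul_pderiv2_eq_zero {f : ℝ → ℝ → Matrix (Fin 2) (Fin 2) ℂ} {x1 x2 : ℝ}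
    (hdiff : ∀ i j, DifferentiableAt ℝ (fun p : ℝ × ℝ => f p.1 p.2 i j) (x1, x2))
    (hinv : ∀ᶠ c in 𝓝 (1 : ℝ), f (c * x1) (c * x2) = f x1 x2) :
    x1 • pderiv1 f x1 x2 + x2 • pderiv2 f x1 x2 = 0 := by
  ext i j
  have hinv_entry : ∀ᶠ c in 𝓝 (1 : ℝ), f (c * x1) (c * x2) i j = f x1 x2 i j :=
    hinv.mono fun c hc => by rw [hc]
  exact (fderiv_prod_apply_eq_smul_deriv_add_smul_deriv (hdiff i j) x1 x2).symm.trans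
    (fderiv_apply_self_eq_zero_of_eventually_smul_eq (hdiff i j) hinv_entry)

lemma commute_of_smul_add_smul_eq_zero {K R : Type*} [DivisionRing K] [NonUnitalNonAssocRing R]
    [Module K R] [IsScalarTower K R R] [SMulCommClass K R R] {a b : K} (ha : a ≠ 0) {x y : R}
    (h : a • x + b • y = 0) : Commute x y := by
  have hx : x = a⁻¹ • -(b • y) := (eq_inv_smul_iff₀ ha).2 (eq_neg_of_add_eq_zero_left h)
  rw [hx]
  exact ((Commute.refl y).smul_left b).neg_left.smul_left a⁻¹

lemma sqrt_mul_sq_sub_mul_sq {c : ℝ} (hc : 0 ≤ c) (a b : ℝ) :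
    √((c * a) ^ 2 - (c * b) ^ 2) = c * √(a ^ 2 - b ^ 2) := by
  rw [mul_pow, mul_pow, ← mul_sub, Real.sqrt_mul (sq_nonneg c), Real.sqrt_sq hc]

/-- The Bloch form `(1 + z A + t B) / 2` of the post-measurement state for measurement coefficients
`x1 = α` and `x2 = β`. In the qubit case `A = σz`, `B = rx σx + ry σy`, and `r` is the
`z`-component of the initial Bloch vector. -/
noncomputable def postMeasurementState (r : ℝ) (A B : Matrix (Fin 2) (Fin 2) ℂ) (x1 x2 : ℝ) :
    Matrix (Fin 2) (Fin 2) ℂ :=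
  (1 / 2 : ℝ) • ((1 : Matrix (Fin 2) (Fin 2) ℂ) + ((x2 + r * x1) / (x1 + x2 * r)) • A
    + (√(x1 ^ 2 - x2 ^ 2) / (x1 + x2 * r)) • B)

namespace postMeasurementState

variable (r : ℝ) (A B : Matrix (Fin 2) (Fin 2) ℂ)

lemma mul_mul_eq {c : ℝ} (hc : 0 < c) (x1 x2 : ℝ) :
    postMeasurementState r A B (c * x1) (c * x2) = postMeasurementState r A B x1 x2 := by
  have hnum : c * x2 + r * (c * x1) = c * (x2 + r * x1) := by ring
  have hden : c * x1 + c * x2 * r = c * (x1 + x2 * r) := by ring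
  simp only [postMeasurementState, sqrt_mul_sq_sub_mul_sq hc.le, hnum, hden,
    mul_div_mul_left _ _ hc.ne']

lemma differentiableAt_entry {x1 x2 : ℝ} (hlt : |x2| < |x1|) (hden : x1 + x2 * r ≠ 0)
    (i j : Fin 2) :
    DifferentiableAt ℝ (fun p : ℝ × ℝ => postMeasurementState r A B p.1 p.2 i j) (x1, x2) := by
  have hrad : x1 ^ 2 - x2 ^ 2 ≠ 0 := (sub_pos.2 (sq_lt_sq.2 hlt)).ne'
  simp only [postMeasurementState, Matrix.add_apply, Matrix.smul_apply]
  fun_prop (disch := assumption)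

end postMeasurementState

theorem stmt_13_general (r : ℝ) (A B : Matrix (Fin 2) (Fin 2) ℂ) {x1 x2 : ℝ}
    (hlt : |x2| < |x1|) (hden : x1 + x2 * r ≠ 0) :
    x1 • pderiv1 (postMeasurementState r A B) x1 x2
        + x2 • pderiv2 (postMeasurementState r A B) x1 x2 = 0 ∧
      Commute (pderiv1 (postMeasurementState r A B) x1 x2)
        (pderiv2 (postMeasurementState r A B) x1 x2) := by
  have hinv : ∀ᶠ c in 𝓝 (1 : ℝ),
      postMeasurementState r A B (c * x1) (c * x2) = postMeasurementState r A B x1 x2 :=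
    (eventually_gt_nhds one_pos).mono fun c hc => postMeasurementState.mul_mul_eq r A B hc x1 x2
  have hx1 : x1 ≠ 0 := abs_pos.1 ((abs_nonneg x2).trans_lt hlt)
  have heuler := smul_pderiv1_add_smul_pderiv2_eq_zero
    (postMeasurementState.differentiableAt_entry r A B hlt hden) hinv
  exact ⟨heuler, commute_of_smul_add_smul_eq_zero hx1 heuler⟩

theorem stmt_13 (rx ry rz : ℝ)
    (f : ℝ → ℝ → Matrix (Fin 2) (Fin 2) ℂ)
    (hf : f = fun x1 x2 => (1 / 2 : ℝ) • ((1 : Matrix (Fin 2) (Fin 2) ℂ)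
        + ((x2 + rz * x1) / (x1 + x2 * rz)) • σz
        + (Real.sqrt (x1 ^ 2 - x2 ^ 2) / (x1 + x2 * rz)) • (rx • σx + ry • σy)))
    (x1 x2 : ℝ) (hx2 : 0 < x2) (hx12 : x2 < x1) (hden : x1 + x2 * rz ≠ 0)
    (D1 D2 : Matrix (Fin 2) (Fin 2) ℂ)
    (hD1 : D1 = pderiv1 f x1 x2) (hD2 : D2 = pderiv2 f x1 x2) :
    x1 • D1 + x2 • D2 = 0 ∧ D1 * D2 = D2 * D1 := by
  subst hf hD1 hD2
  exact stmt_13_general rz σz (rx • σx + ry • σy)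
    (by rwa [abs_of_pos hx2, abs_of_pos (hx2.trans hx12)]) hden
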